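/- Every subset of ℝ definable (with parameters) in the ordered field (ℝ, +, ·, 0, 1, ≤) that has empty interior is finite. -/

import Mathlib

open FirstOrder FirstOrder.Language

/-- The structure on `ℝ` for the language of ordered rings `ring ⊕ order`, interpreting
the ring symbols by the usual field operations and `≤` by the usual order. -/
noncomputable def realOrderedRingStructure :
    (Language.ring.sum Language.order).Structure ℝ :=
  letI := FirstOrder.Ring.compatibleRingOfRing ℝ
  letI := Language.orderStructure ℝ
  inferInstance

/-!
Let `x` and `y` specialize to `ℝ` the coefficients of finitely many polynomials over a ring `A`.
If finitely many suitable elements of `A` have the same signs under `x` and `y`, then the two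
specialized families have the same sign diagram up to an order automorphism of `ℝ`. This goes by
the Cohen–Hörmander induction on the multiset of degrees. A polynomial whose leading coefficient
is sent to zero loses its leading term. Otherwise let `p` have maximal degree: its sign at a root
of `q` is read off from the pseudo-remainder of `p` by `q`, it has at most one root between
consecutive roots of `p'` by Rolle's theorem, and its signs near `±∞` come from its leading
coefficient, so the diagram of the lower-degree family extends to `p`.

An order automorphism carries a quantifier over `ℝ` from one choice of parameters to another, so
the truth of a formula depends only on the signs of finitely many integer polynomials in its free
variables. Membership in a definable subset of `ℝ` therefore depends only on the signs of finitely
many polynomials in one variable, and the frontier of the set consists of roots of these.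
-/

section

open Polynomial Set

section OrderIso

variable {K : Type*} [Field K] [LinearOrder K] [IsStrictOrderedRing K]

lemma exists_orderIso_eqOn_Iic_and_apply_eq {a c d : K} (hac : a < c) (had : a < d) :
    ∃ g : K ≃o K, (∀ t ≤ a, g t = t) ∧ g c = d := by
  set slope : K := (d - a) / (c - a) with hslope
  have hc : 0 < c - a := sub_pos.2 hac
  have slope_pos : 0 < slope := div_pos (sub_pos.2 had) hc
  let stretch (r t : K) : K := if t ≤ a then t else a + r * (t - a)
  have stretch_strictMono : StrictMono (stretch slope) := by
    intro s t hst
    simp only [stretch]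
    split_ifs with hs ht ht
    · exact hst
    · nlinarith [mul_pos slope_pos (sub_pos.2 (not_le.1 ht))]
    · exact absurd (hst.le.trans ht) hs
    · gcongr
  have stretch_inv : Function.RightInverse (stretch slope⁻¹) (stretch slope) := by
    intro t
    by_cases ht : t ≤ a
    · simp [stretch, ht]
    · have : ¬ a + slope⁻¹ * (t - a) ≤ a := by
        simpa using mul_pos (inv_pos.2 slope_pos) (sub_pos.2 (not_le.1 ht))
      simp only [stretch, if_neg ht, if_neg this]
      field_simp
      ring
  refine ⟨stretch_strictMono.orderIsoOfRightInverse _ _ stretch_inv, fun t ht => if_pos ht, ?_⟩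
  change stretch slope c = d
  simp only [stretch, if_neg hac.not_ge, hslope, div_mul_cancel₀ _ hc.ne']
  ring

lemma exists_orderIso_eqOn_of_strictMonoOn (s : Finset K) {φ : K → K} (hφ : StrictMonoOn φ s) :
    ∃ g : K ≃o K, EqOn g φ s := by
  classical
  induction s using Finset.induction_on_max with
  | empty => exact ⟨OrderIso.refl K, by simp⟩
  | insert c s hc ih =>
    rw [Finset.coe_insert] at hφ ⊢
    obtain ⟨g, hg⟩ := ih (hφ.mono (subset_insert c s))
    obtain ⟨a, hsa, ha⟩ := Order.exists_between_finsets (s.image φ) {g c, φ c} <| by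
      simp only [Finset.forall_mem_image, Finset.mem_insert, Finset.mem_singleton,
        forall_eq_or_imp, forall_eq]
      intro t ht
      exact ⟨hg ht ▸ g.lt_iff_lt.2 (hc t ht),
        hφ (mem_insert_of_mem c ht) (mem_insert c _) (hc t ht)⟩
    simp only [Finset.forall_mem_image, Finset.mem_insert, Finset.mem_singleton,
      forall_eq_or_imp, forall_eq] at hsa ha
    obtain ⟨g', hg', hg'c⟩ := exists_orderIso_eqOn_Iic_and_apply_eq ha.1 ha.2
    refine ⟨g.trans g', ?_⟩
    rintro t (rfl | ht)
    · exact hg'c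
    · rw [OrderIso.trans_apply, hg ht, hg' _ (hsa ht).le]

end OrderIso

section SignComparison

variable {α X : Type*} [Zero α] [LinearOrder α]

lemma sign_eq_zero_iff_of_eq {a b : α} (hab : SignType.sign a = SignType.sign b) :
    a = 0 ↔ b = 0 := by
  rw [← sign_eq_zero_iff, hab, sign_eq_zero_iff]

variable [TopologicalSpace α] [OrderTopology α] [TopologicalSpace X]

lemma sign_eq_of_isPreconnected {s : Set X} (hs : IsPreconnected s) {f : X → α}
    (hf : ContinuousOn f s) (h0 : ∀ u ∈ s, f u ≠ 0)
    {a b : X} (ha : a ∈ s) (hb : b ∈ s) : SignType.sign (f a) = SignType.sign (f b) :=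
  hs.constant (fun u hu => (continuousAt_sign_of_ne_zero (h0 u hu)).comp_continuousWithinAt
    (hf u hu)) ha hb

lemma sign_apply_orderIso_of_fixes_zeros [ConditionallyCompleteLinearOrder X] [DenselyOrdered X]
    [OrderTopology X] {f : X → α} (hf : Continuous f) {g : X ≃o X}
    (hg : ∀ z, f z = 0 → g z = z) (t : X) : SignType.sign (f (g t)) = SignType.sign (f t) := by
  by_cases ht : f t = 0
  · rw [hg t ht]
  refine sign_eq_of_isPreconnected (isPreconnected_uIcc (a := t) (b := g t)) hf.continuousOn ?_
    right_mem_uIcc left_mem_uIcc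
  intro z hz hz0
  have hzt : z ≠ t := by rintro rfl; exact ht hz0
  have hgz := hg z hz0
  rcases mem_uIcc.1 hz with ⟨h₁, h₂⟩ | ⟨h₁, h₂⟩
  · exact h₂.not_gt (hgz ▸ g.strictMono (h₁.lt_of_ne hzt.symm))
  · exact h₁.not_gt (hgz ▸ g.strictMono (h₂.lt_of_ne hzt))

end SignComparison

section Position

variable {X : Type*} [LinearOrder X]

lemma exists_consecutive_mem_Ioo {Z : Finset X} {t : X} (ht : t ∉ Z) (hlower : ∃ m ∈ Z, m < t)
    (hupper : ∃ M ∈ Z, t < M) : ∃ a ∈ Z, ∃ b ∈ Z, t ∈ Ioo a b ∧ ∀ z ∈ Z, z ≤ a ∨ b ≤ z := by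
  obtain ⟨a, ha, ha_max⟩ := (Z.filter (· < t)).exists_max_image id
    (by simpa [Finset.Nonempty] using hlower)
  obtain ⟨b, hb, hb_min⟩ := (Z.filter (t < ·)).exists_min_image id
    (by simpa [Finset.Nonempty] using hupper)
  simp only [Finset.mem_filter, id, and_imp] at ha ha_max hb hb_min
  refine ⟨a, ha.1, b, hb.1, ⟨ha.2, hb.2⟩, fun z hz => ?_⟩
  rcases lt_trichotomy z t with hzt | rfl | hzt
  · exact .inl (ha_max z hz hzt)
  · exact absurd hz ht
  · exact .inr (hb_min z hz hzt)

/-- The points `u` and `v` cut the finite set `Z` in the same way. -/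
def SamePosition (Z : Finset X) (u v : X) : Prop :=
  ∀ z ∈ Z, (u < z ↔ v < z) ∧ (z < u ↔ z < v)

namespace SamePosition

variable {Z : Finset X} {u v u' v' : X}

lemma refl (Z : Finset X) (u : X) : SamePosition Z u u := fun _ _ => ⟨Iff.rfl, Iff.rfl⟩

lemma symm (h : SamePosition Z u v) : SamePosition Z v u :=
  fun z hz => ⟨(h z hz).1.symm, (h z hz).2.symm⟩

lemma trans {w : X} (h : SamePosition Z u v) (h' : SamePosition Z v w) : SamePosition Z u w :=
  fun z hz => ⟨(h z hz).1.trans (h' z hz).1, (h z hz).2.trans (h' z hz).2⟩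

lemma eq_of_mem (h : SamePosition Z u v) (hv : v ∈ Z) : u = v := by
  simpa [le_antisymm_iff, and_comm] using h v hv

lemma of_mem_Ioo {a b : X} (hgap : ∀ z ∈ Z, z ≤ a ∨ b ≤ z) (hu : u ∈ Ioo a b)
    (hv : v ∈ Ioo a b) : SamePosition Z u v := by
  intro z hz
  rcases hgap z hz with h | h
  · have huz := h.trans_lt hu.1
    have hvz := h.trans_lt hv.1
    simp only [huz, hvz, huz.not_gt, hvz.not_gt, and_self]
  · have huz := hu.2.trans_le h
    have hvz := hv.2.trans_le h
    simp only [huz, hvz, huz.not_gt, hvz.not_gt, and_self]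

lemma lt_of_lt (hu : SamePosition Z u' u) (hv : SamePosition Z v' v) (huv : u < v)
    (h : ¬ SamePosition Z u v) : u' < v' := by
  contrapose! h
  intro z hz
  obtain ⟨hu_left, hu_right⟩ := hu z hz
  obtain ⟨hv_left, hv_right⟩ := hv z hz
  exact ⟨⟨fun huz => hv_left.1 (h.trans_lt (hu_left.2 huz)), huv.trans⟩,
    ⟨fun hzu => hzu.trans huv, fun hzv => hu_right.1 ((hv_right.2 hzv).trans_le h)⟩⟩

end SamePosition

end Position

section RolleFrame

/-- A finite set `Z` frames a continuous function `f` when it meets every open interval at whose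
endpoints `f` takes equal values, as the critical points of a polynomial do by Rolle's theorem,
and every zero of `f` lies strictly between two points of `Z`. -/
structure IsRolleFrame (f : ℝ → ℝ) (Z : Finset ℝ) : Prop where
  continuous : Continuous f
  rolle : ∀ u v, u < v → f u = f v → ∃ z ∈ Z, z ∈ Ioo u v
  lower : ∃ m ∈ Z, ∀ t ≤ m, f t ≠ 0
  upper : ∃ M ∈ Z, ∀ t ≥ M, f t ≠ 0

namespace IsRolleFrame

variable {f k : ℝ → ℝ} {Z : Finset ℝ}

lemma eq_of_samePosition (hf : IsRolleFrame f Z) {u v : ℝ} (huv : f u = f v)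
    (hpos : SamePosition Z u v) : u = v := by
  wlog h : u < v generalizing u v
  · rcases (not_lt.1 h).eq_or_lt with h | h
    · exact h.symm
    · exact (this huv.symm hpos.symm h).symm
  obtain ⟨z, hz, huz, hzv⟩ := hf.rolle u v h huv
  exact absurd ((hpos z hz).1.1 huz) hzv.not_gt

lemma injOn_Icc (hf : IsRolleFrame f Z) {a b : ℝ} (hgap : ∀ z ∈ Z, z ≤ a ∨ b ≤ z) :
    InjOn f (Icc a b) := by
  intro u hu v hv huv
  wlog h : u < v generalizing u v
  · rcases (not_lt.1 h).eq_or_lt with h | h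
    · exact h.symm
    · exact (this hv hu huv.symm h).symm
  obtain ⟨z, hz, huz, hzv⟩ := hf.rolle u v h huv
  rcases hgap z hz with h | h
  · exact absurd (hu.1.trans_lt huz) h.not_gt
  · exact absurd (hzv.trans_le hv.2) h.not_gt

lemma finite_zeros (hf : IsRolleFrame f Z) : {t | f t = 0}.Finite := by
  let position (t : ℝ) (z : Z) : Prop × Prop := (t < z, z < t)
  refine Finite.of_finite_image (f := position) (toFinite _) fun u hu v hv huv => ?_
  refine hf.eq_of_samePosition (hu.trans hv.symm) fun z hz => ?_
  simpa [position] using congrFun huv ⟨z, hz⟩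

lemma exists_consecutive (hf : IsRolleFrame f Z) {c : ℝ} (hc : f c = 0) (hcZ : c ∉ Z) :
    ∃ a ∈ Z, ∃ b ∈ Z, c ∈ Ioo a b ∧ ∀ z ∈ Z, z ≤ a ∨ b ≤ z := by
  obtain ⟨m, hm, hlower⟩ := hf.lower
  obtain ⟨M, hM, hupper⟩ := hf.upper
  exact exists_consecutive_mem_Ioo hcZ ⟨m, hm, lt_of_not_ge fun h => hlower c h hc⟩
    ⟨M, hM, lt_of_not_ge fun h => hupper c h hc⟩

lemma exists_zero_samePosition (hf : IsRolleFrame f Z) (hk : Continuous k)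
    (hsign : ∀ z ∈ Z, SignType.sign (f z) = SignType.sign (k z)) {c : ℝ} (hc : f c = 0) :
    ∃ d, k d = 0 ∧ SamePosition Z d c := by
  by_cases hcZ : c ∈ Z
  · refine ⟨c, ?_, .refl Z c⟩
    rw [← sign_eq_zero_iff, ← hsign c hcZ, hc, sign_zero]
  obtain ⟨a, ha, b, hb, hcab, hgap⟩ := hf.exists_consecutive hc hcZ
  have hab : a ≤ b := (hcab.1.trans hcab.2).le
  have a_mem : a ∈ Icc a b := left_mem_Icc.2 hab
  have b_mem : b ∈ Icc a b := right_mem_Icc.2 hab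
  have c_mem : c ∈ Icc a b := Ioo_subset_Icc_self hcab
  obtain ⟨d, hd, hkd⟩ : ∃ d ∈ Ioo a b, k d = 0 := by
    rcases hf.continuous.continuousOn.strictMonoOn_of_injOn_Icc' hab (hf.injOn_Icc hgap)
      with hmono | hanti
    · have hka : k a < 0 := by
        rw [← sign_eq_neg_one_iff, ← hsign a ha, sign_neg (hc ▸ hmono a_mem c_mem hcab.1)]
      have hkb : 0 < k b := by
        rw [← sign_eq_one_iff, ← hsign b hb, sign_pos (hc ▸ hmono c_mem b_mem hcab.2)]
      exact intermediate_value_Ioo hab hk.continuousOn ⟨hka, hkb⟩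
    · have hka : 0 < k a := by
        rw [← sign_eq_one_iff, ← hsign a ha, sign_pos (hc ▸ hanti a_mem c_mem hcab.1)]
      have hkb : k b < 0 := by
        rw [← sign_eq_neg_one_iff, ← hsign b hb, sign_neg (hc ▸ hanti c_mem b_mem hcab.2)]
      exact intermediate_value_Ioo' hab hk.continuousOn ⟨hkb, hka⟩
  exact ⟨d, hkd, .of_mem_Ioo hgap hd hcab⟩

lemma exists_mem_uIcc_ne_zero (hf : IsRolleFrame f Z) {t : ℝ} (ht : f t ≠ 0) :
    ∃ c ∈ Z, ∀ u ∈ uIcc c t, f u ≠ 0 := by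
  by_cases htZ : t ∈ Z
  · exact ⟨t, htZ, by simpa using ht⟩
  obtain ⟨m, hm, hlower⟩ := hf.lower
  obtain ⟨M, hM, hupper⟩ := hf.upper
  rcases le_or_gt t m with htm | htm
  · exact ⟨m, hm, fun u hu => hlower u (uIcc_of_ge htm ▸ hu).2⟩
  rcases le_or_gt M t with htM | htM
  · exact ⟨M, hM, fun u hu => hupper u (uIcc_of_le htM ▸ hu).1⟩
  obtain ⟨a, ha, b, hb, ⟨hat, htb⟩, hgap⟩ :=
    exists_consecutive_mem_Ioo htZ ⟨m, hm, htm⟩ ⟨M, hM, htM⟩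
  by_contra! hzero
  obtain ⟨u, hu, hfu⟩ := hzero a ha
  obtain ⟨v, hv, hfv⟩ := hzero b hb
  rw [uIcc_of_le hat.le] at hu
  rw [uIcc_of_ge htb.le] at hv
  have huv : u = v := hf.injOn_Icc hgap ⟨hu.1, hu.2.trans htb.le⟩ ⟨hat.le.trans hv.1, hv.2⟩
    (hfu.trans hfv.symm)
  exact ht ((hu.2.antisymm (huv ▸ hv.1)) ▸ hfu)

lemma exists_orderIso_zeros (hf : IsRolleFrame f Z) (hk : IsRolleFrame k Z)
    (hsign : ∀ z ∈ Z, SignType.sign (f z) = SignType.sign (k z)) :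
    ∃ g : ℝ ≃o ℝ, (∀ z ∈ Z, g z = z) ∧ ∀ t, k (g t) = 0 ↔ f t = 0 := by
  classical
  have hexists : ∀ c, ∃ d, (f c = 0 → k d = 0) ∧ SamePosition Z d c := by
    intro c
    by_cases hc : f c = 0
    · obtain ⟨d, hd, hpos⟩ := hf.exists_zero_samePosition hk.continuous hsign hc
      exact ⟨d, fun _ => hd, hpos⟩
    · exact ⟨c, fun h => absurd h hc, .refl Z c⟩
  choose φ hφ_zero hφ_pos using hexists
  have hφ : StrictMonoOn φ ↑(Z ∪ hf.finite_zeros.toFinset) := by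
    intro c hc c' hc' hcc'
    refine (hφ_pos c).lt_of_lt (hφ_pos c') hcc' fun hsame => hcc'.ne ?_
    simp only [Finset.coe_union, Finite.coe_toFinset, mem_union, Finset.mem_coe,
      mem_ofPred_eq] at hc hc'
    rcases hc with hc | hc
    · exact (hsame.symm.eq_of_mem hc).symm
    rcases hc' with hc' | hc'
    · exact hsame.eq_of_mem hc'
    · exact hf.eq_of_samePosition (hc.trans hc'.symm) hsame
  obtain ⟨g, hg⟩ := exists_orderIso_eqOn_of_strictMonoOn _ hφ
  have hg_zero : ∀ t, f t = 0 → g t = φ t := fun t ht => hg (by simp [ht])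
  refine ⟨g, fun z hz => (hg (by simp [hz])).trans ((hφ_pos z).eq_of_mem hz), fun t => ?_⟩
  refine ⟨fun ht => ?_, fun ht => hg_zero t ht ▸ hφ_zero t ht⟩
  obtain ⟨c, hc, hpos⟩ := hk.exists_zero_samePosition hf.continuous
    (fun z hz => (hsign z hz).symm) ht
  have : g t = g c := by
    rw [hg_zero c hc]
    exact hk.eq_of_samePosition (ht.trans (hφ_zero c hc).symm) (hpos.symm.trans (hφ_pos c).symm)
  rwa [g.injective this]

theorem exists_orderIso_sign_eq (hf : IsRolleFrame f Z) (hk : IsRolleFrame k Z)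
    (hsign : ∀ z ∈ Z, SignType.sign (f z) = SignType.sign (k z)) :
    ∃ g : ℝ ≃o ℝ, (∀ z ∈ Z, g z = z) ∧
      ∀ t, SignType.sign (f t) = SignType.sign (k (g t)) := by
  obtain ⟨g, hgZ, hg⟩ := hf.exists_orderIso_zeros hk hsign
  refine ⟨g, hgZ, fun t => ?_⟩
  by_cases ht : f t = 0
  · rw [ht, (hg t).2 ht]
  obtain ⟨c, hcZ, hc⟩ := hf.exists_mem_uIcc_ne_zero ht
  have hkg : ∀ u ∈ uIcc c t, k (g u) ≠ 0 := fun u hu => (hg u).not.2 (hc u hu)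
  calc SignType.sign (f t)
      = SignType.sign (f c) := sign_eq_of_isPreconnected isPreconnected_uIcc
        hf.continuous.continuousOn hc right_mem_uIcc left_mem_uIcc
    _ = SignType.sign (k (g c)) := by rw [hsign c hcZ, hgZ c hcZ]
    _ = SignType.sign (k (g t)) := sign_eq_of_isPreconnected isPreconnected_uIcc
        (hk.continuous.comp g.continuous).continuousOn hkg left_mem_uIcc right_mem_uIcc

end IsRolleFrame

end RolleFrame

section RealPolynomial

open Filter

lemma eventually_atTop_sign_eval_eq (p : ℝ[X]) :
    ∀ᶠ t in atTop, SignType.sign (p.eval t) = SignType.sign p.leadingCoeff := by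
  rcases p.natDegree.eq_zero_or_pos with hdeg | hdeg
  · rw [eq_C_of_natDegree_eq_zero hdeg]
    simp
  have hdeg' : 0 < p.degree := natDegree_pos_iff_degree_pos.1 hdeg
  have hlc : p.leadingCoeff ≠ 0 := leadingCoeff_ne_zero.2 (ne_zero_of_natDegree_gt hdeg)
  rcases hlc.lt_or_gt with h | h
  · filter_upwards [(p.tendsto_atBot_of_leadingCoeff_nonpos hdeg' h.le).eventually_lt_atBot 0]
      with t ht
    rw [sign_neg ht, sign_neg h]
  · filter_upwards [(p.tendsto_atTop_of_leadingCoeff_nonneg hdeg' h.le).eventually_gt_atTop 0]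
      with t ht
    rw [sign_pos ht, sign_pos h]

lemma eventually_atBot_sign_eval_eq (p : ℝ[X]) :
    ∀ᶠ t in atBot,
      SignType.sign (p.eval t) = SignType.sign ((-1) ^ p.natDegree * p.leadingCoeff) := by
  have hcomp : (p.comp (-X)).leadingCoeff = (-1) ^ p.natDegree * p.leadingCoeff := by
    rw [leadingCoeff_comp (by simp), mul_comm]
    simp
  filter_upwards [tendsto_neg_atBot_atTop.eventually (eventually_atTop_sign_eval_eq (p.comp (-X)))]
    with t ht
  simpa [hcomp] using ht

lemma exists_derivative_eval_eq_zero (p : ℝ[X]) {u v : ℝ} (huv : u < v)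
    (h : p.eval u = p.eval v) : ∃ z ∈ Ioo u v, (derivative p).eval z = 0 := by
  obtain ⟨z, hz, hderiv⟩ := exists_deriv_eq_zero huv p.continuous.continuousOn h
  exact ⟨z, hz, p.deriv ▸ hderiv⟩

lemma isRolleFrame_eval_orderIso (p : ℝ[X]) (h : ℝ ≃o ℝ) {Z : Finset ℝ} {m M : ℝ} (hm : m ∈ Z)
    (hM : M ∈ Z) (hder : ∀ z, (derivative p).eval (h z) = 0 → z ∈ Z)
    (hends : ∀ t, t ≤ m ∨ M ≤ t → p.eval (h t) ≠ 0) :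
    IsRolleFrame (fun t => p.eval (h t)) Z where
  continuous := p.continuous.comp h.continuous
  rolle u v huv heq := by
    obtain ⟨w, hw, hw0⟩ := exists_derivative_eval_eq_zero p (h.strictMono huv) heq
    obtain ⟨z, rfl⟩ := h.surjective w
    exact ⟨z, hder z hw0, h.lt_iff_lt.1 hw.1, h.lt_iff_lt.1 hw.2⟩
  lower := ⟨m, hm, fun t ht => hends t (.inl ht)⟩
  upper := ⟨M, hM, fun t ht => hends t (.inr ht)⟩

end RealPolynomial

section FiniteReplacement

lemma finset_induction_on_replacement {ι α : Type*} [DecidableEq ι] [Preorder α]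
    [WellFoundedLT α] (f : ι → α) {motive : Finset ι → Prop}
    (step : ∀ s, (∀ i ∈ s, ∀ t : Finset ι, (∀ j ∈ t, f j < f i) → motive (s.erase i ∪ t)) →
      motive s) (s : Finset ι) : motive s := by
  induction s using (InvImage.wf (fun s : Finset ι => s.val.map f)
    Multiset.wellFounded_isDershowitzMannaLT).induction with
  | _ s ih =>
  refine step s fun i hi t ht => ih _ ?_
  refine ⟨(s.erase i).val.map f, (t \ s.erase i).val.map f, {f i}, by simp, ?_, ?_, ?_⟩
  · change (s.erase i ∪ t).val.map f = _
    rw [← Multiset.map_add, ← Finset.union_sdiff_self_eq_union,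
      ← Finset.disjUnion_eq_union _ _ Finset.disjoint_sdiff, Finset.disjUnion_val]
  · change s.val.map f = _
    rw [add_comm, Multiset.singleton_add, ← Multiset.map_cons, Finset.erase_val,
      Multiset.cons_erase hi]
  · simp only [Multiset.mem_map, Finset.mem_val, Finset.mem_sdiff, Multiset.mem_singleton,
      exists_eq_left]
    rintro _ ⟨j, hj, rfl⟩
    exact ht j hj.1

end FiniteReplacement

section PseudoDivision

variable {A : Type*} [CommRing A]

lemma exists_pseudo_division (p : A[X]) {q : A[X]} (hq : 0 < q.natDegree) :
    ∃ (k : ℕ) (s r : A[X]), C q.leadingCoeff ^ k * p = q * s + r ∧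
      r.natDegree < q.natDegree := by
  induction hn : p.natDegree using Nat.strong_induction_on generalizing p with
  | _ n ih =>
  subst hn
  by_cases hpq : p.natDegree < q.natDegree
  · exact ⟨0, 0, p, by simp, hpq⟩
  obtain ⟨k, s, r, heq, hr⟩ := ih _ (natDegree_cancelLeads_lt_of_natDegree_le_natDegree_of_comm
    (mul_comm _ _) (not_lt.1 hpq) (hq.trans_le (not_lt.1 hpq))) (q.cancelLeads p) rfl
  rw [cancelLeads, Nat.sub_eq_zero_of_le (not_lt.1 hpq), pow_zero, mul_one] at heq
  refine ⟨k + 1, C q.leadingCoeff ^ k * C p.leadingCoeff * X ^ (p.natDegree - q.natDegree) + s,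
    r, ?_, hr⟩
  linear_combination heq

lemma exists_finset_pseudo_remainders (p : A[X]) (S : Finset A[X])
    (hS : ∀ q ∈ S, q.natDegree ≤ p.natDegree) :
    ∃ R : Finset A[X], (∀ r ∈ R, r.natDegree < p.natDegree) ∧
      ∀ q ∈ S, 0 < q.natDegree →
        ∃ r ∈ R, ∃ (k : ℕ) (s : A[X]), C q.leadingCoeff ^ k * p = q * s + r := by
  classical
  choose! k s r heq hr using fun (q : A[X]) => exists_pseudo_division p (q := q)
  refine ⟨{q ∈ S | 0 < q.natDegree}.image r, ?_, fun q hq hpos => ?_⟩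
  · simp only [Finset.forall_mem_image, Finset.mem_filter]
    exact fun q hq => (hr q hq.2).trans_le (hS q hq.1)
  · exact ⟨r q, Finset.mem_image_of_mem _ (Finset.mem_filter.2 ⟨hq, hpos⟩), k q, s q, heq q hpos⟩

end PseudoDivision

section Specialization

variable {A : Type*} [CommRing A] {p : A[X]}

section CharZero

variable {K : Type*} [CommRing K] [NoZeroDivisors K] [CharZero K] {x : A →+* K}

lemma leadingCoeff_derivative_of_map_ne_zero (hx : x p.leadingCoeff ≠ 0) :
    (derivative p).leadingCoeff = p.leadingCoeff * p.natDegree := by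
  rcases p.natDegree.eq_zero_or_pos with hp | hp
  · simp [derivative_of_natDegree_zero hp, hp]
  have hcoeff : (derivative p).coeff (p.natDegree - 1) = p.leadingCoeff * p.natDegree := by
    rw [coeff_derivative, Nat.sub_add_cancel hp, coeff_natDegree, ← Nat.cast_add_one,
      Nat.sub_add_cancel hp]
  have hne : (derivative p).coeff (p.natDegree - 1) ≠ 0 := by
    rw [hcoeff]
    refine ne_zero_of_map (f := x) ?_
    rw [map_mul, map_natCast]
    exact mul_ne_zero hx (Nat.cast_ne_zero.2 hp.ne')
  rw [← hcoeff, ← coeff_natDegree,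
    (natDegree_derivative_le p).antisymm (le_natDegree_of_ne_zero hne)]

lemma map_derivative_ne_zero (hp : 0 < p.natDegree) (hx : x p.leadingCoeff ≠ 0) :
    (derivative p).map x ≠ 0 := by
  rw [← derivative_map, Ne, derivative_eq_zero, natDegree_map_of_leadingCoeff_ne_zero _ hx]
  exact hp.ne'

end CharZero

lemma exists_sign_eval_map_eq_of_le_or_ge {x y : A →+* ℝ} (hx : x p.leadingCoeff ≠ 0)
    (hsign : SignType.sign (x p.leadingCoeff) = SignType.sign (y p.leadingCoeff))
    (h : ℝ ≃o ℝ) :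
    ∃ m M, ∀ t, t ≤ m ∨ M ≤ t → (p.map x).eval t ≠ 0 ∧
      SignType.sign ((p.map x).eval t) = SignType.sign ((p.map y).eval (h t)) := by
  have hy : y p.leadingCoeff ≠ 0 := (sign_eq_zero_iff_of_eq hsign).not.1 hx
  have hxtop := eventually_atTop_sign_eval_eq (p.map x)
  have hxbot := eventually_atBot_sign_eval_eq (p.map x)
  have hytop := h.tendsto_atTop.eventually (eventually_atTop_sign_eval_eq (p.map y))
  have hybot := h.tendsto_atBot.eventually (eventually_atBot_sign_eval_eq (p.map y))
  rw [leadingCoeff_map_of_leadingCoeff_ne_zero _ hx] at hxtop hxbot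
  rw [leadingCoeff_map_of_leadingCoeff_ne_zero _ hy] at hytop hybot
  rw [natDegree_map_of_leadingCoeff_ne_zero _ hx] at hxbot
  rw [natDegree_map_of_leadingCoeff_ne_zero _ hy] at hybot
  obtain ⟨M, hM⟩ := Filter.eventually_atTop.1 (hxtop.and hytop)
  obtain ⟨m, hm⟩ := Filter.eventually_atBot.1 (hxbot.and hybot)
  refine ⟨m, M, fun t ht => ?_⟩
  rcases ht with ht | ht
  · obtain ⟨hxt, hyt⟩ := hm t ht
    refine ⟨?_, by rw [hxt, hyt, sign_mul, sign_mul, hsign]⟩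
    rw [← sign_ne_zero, hxt, sign_ne_zero]
    exact mul_ne_zero (pow_ne_zero _ (by norm_num)) hx
  · obtain ⟨hxt, hyt⟩ := hM t ht
    refine ⟨?_, by rw [hxt, hyt, hsign]⟩
    rwa [← sign_ne_zero, hxt, sign_ne_zero]

end Specialization

section SignMatch

variable {A : Type*} [CommRing A] {x y : A →+* ℝ} {h : ℝ ≃o ℝ} {p q : A[X]}

/-- The specializations of `p` along `x` and `y` have the same sign diagram on the real line, up to
the change of variable `h`. -/
def SignMatch (x y : A →+* ℝ) (h : ℝ ≃o ℝ) (p : A[X]) : Prop :=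
  ∀ t, SignType.sign ((p.map x).eval t) = SignType.sign ((p.map y).eval (h t))

namespace SignMatch

lemma eval_eq_zero_iff (hp : SignMatch x y h p) (t : ℝ) :
    (p.map x).eval t = 0 ↔ (p.map y).eval (h t) = 0 :=
  sign_eq_zero_iff_of_eq (hp t)

lemma trans_orderIso (hp : SignMatch x y h p) {g : ℝ ≃o ℝ}
    (hg : ∀ z, p.map x ≠ 0 → (p.map x).eval z = 0 → g z = z) : SignMatch x y (g.trans h) p := by
  intro t
  rw [OrderIso.trans_apply, ← hp (g t)]
  by_cases h0 : p.map x = 0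
  · simp [h0]
  · exact (sign_apply_orderIso_of_fixes_zeros (p.map x).continuous (fun z => hg z h0) t).symm

lemma of_eraseLead (hp : SignMatch x y h p.eraseLead) (hx : x p.leadingCoeff = 0)
    (hy : y p.leadingCoeff = 0) : SignMatch x y h p := by
  have map_eraseLead (w : A →+* ℝ) (hw : w p.leadingCoeff = 0) :
      p.eraseLead.map w = p.map w := by
    conv_rhs => rw [← eraseLead_add_C_mul_X_pow p]
    rw [Polynomial.map_add, Polynomial.map_mul, map_C, hw, C_0, zero_mul, add_zero]
  intro t
  rw [← map_eraseLead x hx, ← map_eraseLead y hy]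
  exact hp t

lemma of_natDegree_eq_zero (hp : p.natDegree = 0)
    (hsign : SignType.sign (x p.leadingCoeff) = SignType.sign (y p.leadingCoeff)) :
    SignMatch x y h p := by
  intro t
  rw [eq_C_of_natDegree_eq_zero hp] at hsign ⊢
  simpa using hsign

lemma sign_eval_eq_of_pseudo_division {r s : A[X]} {k : ℕ}
    (heq : C q.leadingCoeff ^ k * p = q * s + r) (hq : SignMatch x y h q)
    (hr : SignMatch x y h r) (hx : x q.leadingCoeff ≠ 0)
    (hsign : SignType.sign (x q.leadingCoeff) = SignType.sign (y q.leadingCoeff)) {z : ℝ}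
    (hz : (q.map x).eval z = 0) :
    SignType.sign ((p.map x).eval z) = SignType.sign ((p.map y).eval (h z)) := by
  have eval_remainder (w : A →+* ℝ) (u : ℝ) (hu : (q.map w).eval u = 0) :
      w q.leadingCoeff ^ k * (p.map w).eval u = (r.map w).eval u := by
    simpa [hu] using congrArg (fun f => (f.map w).eval u) heq
  have hmul := hr z
  rw [← eval_remainder x z hz, ← eval_remainder y (h z) ((hq.eval_eq_zero_iff z).1 hz),
    sign_mul, sign_mul, sign_pow, sign_pow, ← hsign] at hmul
  exact mul_left_cancel₀ (pow_ne_zero k (sign_ne_zero.2 hx)) hmul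

theorem exists_orderIso_insert [DecidableEq A[X]] {S : Finset A[X]}
    (hS : ∀ q ∈ S, SignMatch x y h q) (hp : 0 < p.natDegree) (hder : derivative p ∈ S)
    (hx : x p.leadingCoeff ≠ 0)
    (hsign : SignType.sign (x p.leadingCoeff) = SignType.sign (y p.leadingCoeff))
    (hroots : ∀ q ∈ S, q.map x ≠ 0 → ∀ z, (q.map x).eval z = 0 →
      SignType.sign ((p.map x).eval z) = SignType.sign ((p.map y).eval (h z))) :
    ∃ h' : ℝ ≃o ℝ, ∀ q ∈ insert p S, SignMatch x y h' q := by
  obtain ⟨m, M, hends⟩ := exists_sign_eval_map_eq_of_le_or_ge hx hsign h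
  let Z : Finset ℝ := {m, M} ∪ S.biUnion fun q => (q.map x).roots.toFinset
  have mem_Z : ∀ q ∈ S, ∀ z, q.map x ≠ 0 → (q.map x).eval z = 0 → z ∈ Z := by
    intro q hq z hq0 hz
    refine Finset.mem_union_right _ (Finset.mem_biUnion.2 ⟨q, hq, ?_⟩)
    simpa [hq0] using hz
  have hsignZ : ∀ z ∈ Z,
      SignType.sign ((p.map x).eval z) = SignType.sign ((p.map y).eval (h z)) := by
    intro z hz
    simp only [Z, Finset.mem_union, Finset.mem_insert, Finset.mem_singleton, Finset.mem_biUnion,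
      Multiset.mem_toFinset] at hz
    rcases hz with (rfl | rfl) | ⟨q, hq, hz⟩
    · exact (hends z (.inl le_rfl)).2
    · exact (hends z (.inr le_rfl)).2
    · exact hroots q hq (ne_zero_of_mem_roots hz) z (isRoot_of_mem_roots hz)
  have hder_x : ∀ z, (derivative (p.map x)).eval z = 0 → z ∈ Z := fun z hz =>
    mem_Z _ hder z (map_derivative_ne_zero hp hx) (derivative_map p x ▸ hz)
  have hder_y : ∀ z, (derivative (p.map y)).eval (h z) = 0 → z ∈ Z := fun z hz =>
    hder_x z (derivative_map p x ▸ ((hS _ hder).eval_eq_zero_iff z).2 (derivative_map p y ▸ hz))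
  have frame_x := isRolleFrame_eval_orderIso (p.map x) (.refl ℝ) (m := m) (M := M) (Z := Z)
    (by simp [Z]) (by simp [Z]) hder_x fun t ht => (hends t ht).1
  have frame_y := isRolleFrame_eval_orderIso (p.map y) h (m := m) (M := M) (Z := Z)
    (by simp [Z]) (by simp [Z]) hder_y
    fun t ht => (sign_eq_zero_iff_of_eq (hends t ht).2).not.1 (hends t ht).1
  obtain ⟨g, hgZ, hg⟩ := frame_x.exists_orderIso_sign_eq frame_y hsignZ
  refine ⟨g.trans h, Finset.forall_mem_insert .. |>.2 ⟨hg, fun q hq => ?_⟩⟩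
  exact (hS q hq).trans_orderIso fun z hq0 hz => hgZ z (mem_Z q hq z hq0 hz)

end SignMatch

end SignMatch

section FinitelyDetermined

variable {A : Type*} [CommRing A] {x y : A →+* ℝ} {p : A[X]}

lemma SignMatch.exists_orderIso_of_leadingCoeff_ne_zero [DecidableEq A[X]] {h : ℝ ≃o ℝ}
    {P R : Finset A[X]} (hp : p ∈ P) (hdeg : 0 < p.natDegree)
    (hrem : ∀ q ∈ insert (derivative p) (P.erase p), 0 < q.natDegree →
      ∃ r ∈ R, ∃ (k : ℕ) (s : A[X]), C q.leadingCoeff ^ k * p = q * s + r)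
    (hP : ∀ q ∈ insert (derivative p) (P.erase p), SignMatch x y h q)
    (hR : ∀ r ∈ R, SignMatch x y h r)
    (hx : ∀ q ∈ P, 0 < q.natDegree → x q.leadingCoeff ≠ 0)
    (hsign : ∀ q ∈ P, SignType.sign (x q.leadingCoeff) = SignType.sign (y q.leadingCoeff)) :
    ∃ h' : ℝ ≃o ℝ, ∀ q ∈ P, SignMatch x y h' q := by
  have hsign_der : SignType.sign (x (derivative p).leadingCoeff) =
      SignType.sign (y (derivative p).leadingCoeff) := by
    simp only [leadingCoeff_derivative_of_map_ne_zero (hx p hp hdeg), map_mul, map_natCast,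
      sign_mul, hsign p hp]
  have hx_der : x (derivative p).leadingCoeff ≠ 0 := by
    rw [leadingCoeff_derivative_of_map_ne_zero (hx p hp hdeg), map_mul, map_natCast]
    exact mul_ne_zero (hx p hp hdeg) (Nat.cast_ne_zero.2 hdeg.ne')
  have hlc : ∀ q ∈ insert (derivative p) (P.erase p), 0 < q.natDegree →
      x q.leadingCoeff ≠ 0 ∧
        SignType.sign (x q.leadingCoeff) = SignType.sign (y q.leadingCoeff) := by
    simp only [Finset.forall_mem_insert, hx_der, hsign_der, ne_eq, not_false_eq_true, and_self,
      implies_true, true_and]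
    exact fun q hq hq_deg => ⟨hx q (Finset.mem_of_mem_erase hq) hq_deg,
      hsign q (Finset.mem_of_mem_erase hq)⟩
  obtain ⟨h', hh'⟩ := exists_orderIso_insert hP hdeg (Finset.mem_insert_self _ _) (hx p hp hdeg)
    (hsign p hp) fun q hq hq0 z hz => by
      rcases q.natDegree.eq_zero_or_pos with hq_deg | hq_deg
      · rw [eq_C_of_natDegree_eq_zero hq_deg, map_C] at hq0 hz
        exact absurd (by simpa using hz) (C_ne_zero.1 hq0)
      obtain ⟨r, hr, k, s, heq⟩ := hrem q hq hq_deg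
      obtain ⟨hq_ne, hq_sign⟩ := hlc q hq hq_deg
      exact sign_eval_eq_of_pseudo_division heq (hP q hq) (hR r hr) hq_ne hq_sign hz
  refine ⟨h', fun q hq => hh' q ?_⟩
  simp only [Finset.mem_insert, Finset.mem_erase]
  tauto

/-- Finitely many coefficient signs decide, up to an order automorphism of `ℝ`, the joint sign
diagram of the specializations of the polynomials in `P`. -/
def FinitelyDetermined (P : Finset A[X]) : Prop :=
  ∃ F : Finset A, ∀ x y : A →+* ℝ, (∀ a ∈ F, SignType.sign (x a) = SignType.sign (y a)) →
    ∃ h : ℝ ≃o ℝ, ∀ p ∈ P, SignMatch x y h p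

namespace FinitelyDetermined

lemma of_natDegree_eq_zero {P : Finset A[X]} (hP : ∀ p ∈ P, p.natDegree = 0) :
    FinitelyDetermined P := by
  classical
  exact ⟨P.image leadingCoeff, fun x y hF => ⟨.refl ℝ, fun p hp =>
    .of_natDegree_eq_zero (hP p hp) (hF _ (Finset.mem_image_of_mem _ hp))⟩⟩

lemma of_remainders_of_eraseLead [DecidableEq A[X]] {P R : Finset A[X]} (hp : p ∈ P)
    (hdeg : 0 < p.natDegree)
    (hrem : ∀ q ∈ insert (derivative p) (P.erase p), 0 < q.natDegree →
      ∃ r ∈ R, ∃ (k : ℕ) (s : A[X]), C q.leadingCoeff ^ k * p = q * s + r)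
    (hR : FinitelyDetermined (P.erase p ∪ insert (derivative p) R))
    (hlead : ∀ q ∈ P, 0 < q.natDegree → FinitelyDetermined (P.erase q ∪ {q.eraseLead})) :
    FinitelyDetermined P := by
  classical
  obtain ⟨F, hF⟩ := hR
  choose! G hG using hlead
  refine ⟨F ∪ P.biUnion G ∪ P.image leadingCoeff, fun x y hxy => ?_⟩
  simp only [Finset.mem_union, or_imp, forall_and, Finset.mem_biUnion,
    Finset.forall_mem_image] at hxy
  obtain ⟨⟨hxyF, hxyG⟩, hsign⟩ := hxy
  by_cases hx : ∀ q ∈ P, 0 < q.natDegree → x q.leadingCoeff ≠ 0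
  · obtain ⟨h, hh⟩ := hF x y hxyF
    exact SignMatch.exists_orderIso_of_leadingCoeff_ne_zero hp hdeg hrem
      (fun q hq => hh q (by simp only [Finset.mem_union, Finset.mem_insert] at hq ⊢; tauto))
      (fun r hr => hh r (by simp [hr])) hx @hsign
  · push Not at hx
    obtain ⟨q, hq, hq_deg, hxq⟩ := hx
    obtain ⟨h, hh⟩ := hG q hq hq_deg x y fun a ha => hxyG a ⟨q, hq, ha⟩
    refine ⟨h, fun r hr => ?_⟩
    by_cases hrq : r = q
    · subst hrq
      exact (hh _ (by simp)).of_eraseLead hxq ((sign_eq_zero_iff_of_eq (hsign hr)).1 hxq)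
    · exact hh r (by simp [hr, hrq])

end FinitelyDetermined

theorem finitelyDetermined (P : Finset A[X]) : FinitelyDetermined P := by
  classical
  refine finset_induction_on_replacement natDegree (motive := FinitelyDetermined)
    (fun P ih => ?_) P
  by_cases hconst : ∀ p ∈ P, p.natDegree = 0
  · exact .of_natDegree_eq_zero hconst
  push Not at hconst
  obtain ⟨p₀, hp₀, hdeg₀⟩ := hconst
  obtain ⟨p, hp, hmax⟩ := P.exists_max_image natDegree ⟨p₀, hp₀⟩
  have hdeg : 0 < p.natDegree := hdeg₀.pos.trans_le (hmax p₀ hp₀)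
  have hder : (derivative p).natDegree < p.natDegree := natDegree_derivative_lt hdeg.ne'
  obtain ⟨R, hR, hrem⟩ := exists_finset_pseudo_remainders p (insert (derivative p) (P.erase p)) <|
    Finset.forall_mem_insert .. |>.2 ⟨hder.le, fun q hq => hmax q (Finset.mem_of_mem_erase hq)⟩
  refine .of_remainders_of_eraseLead hp hdeg hrem
    (ih p hp _ (Finset.forall_mem_insert .. |>.2 ⟨hder, hR⟩)) fun q hq hq_deg => ih q hq _ ?_
  simp only [Finset.mem_singleton, forall_eq]
  rcases eraseLead_natDegree_lt_or_eraseLead_eq_zero q with hlt | hzero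
  · exact hlt
  · rwa [hzero, natDegree_zero]

end FinitelyDetermined

section SignDetermined

/-- Evaluation of integer polynomials at a point with coordinates in a commutative ring. -/
noncomputable abbrev intEval {β R : Type*} [CommRing R] (v : β → R) : MvPolynomial β ℤ →+* R :=
  MvPolynomial.eval₂Hom (Int.castRingHom R) v

lemma map_intEval {β R S : Type*} [CommRing R] [CommRing S] (φ : R →+* S) (v : β → R)
    (q : MvPolynomial β ℤ) : φ (intEval v q) = intEval (φ ∘ v) q := by
  rw [← RingHom.comp_apply, MvPolynomial.comp_eval₂Hom, RingHom.eq_intCast' (φ.comp _)]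
  rfl

variable {α : Type*} {n : ℕ}

/-- The truth of `r v xs` depends only on the signs of finitely many integer polynomials in
`v` and `xs`; the variables are split as those of a `BoundedFormula`. -/
def SignDetermined (r : (α → ℝ) → (Fin n → ℝ) → Prop) : Prop :=
  ∃ F : Finset (MvPolynomial (α ⊕ Fin n) ℤ), ∀ v w xs ys,
    (∀ f ∈ F, SignType.sign (intEval (Sum.elim v xs) f) =
      SignType.sign (intEval (Sum.elim w ys) f)) → (r v xs ↔ r w ys)

/-- An integer polynomial regarded as a polynomial in its last variable. -/
noncomputable def asUnivariate (α : Type*) (n : ℕ) :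
    MvPolynomial (α ⊕ Fin (n + 1)) ℤ →+* (MvPolynomial (α ⊕ Fin n) ℤ)[X] :=
  intEval (Sum.elim (fun a => C (.X (.inl a)))
    (Fin.snoc (α := fun _ => (MvPolynomial (α ⊕ Fin n) ℤ)[X]) (fun i => C (.X (.inr i))) X))

lemma eval_map_asUnivariate (q : MvPolynomial (α ⊕ Fin (n + 1)) ℤ) (v : α → ℝ) (xs : Fin n → ℝ)
    (a : ℝ) : ((asUnivariate α n q).map (intEval (Sum.elim v xs))).eval a =
      intEval (Sum.elim v (Fin.snoc (α := fun _ => ℝ) xs a)) q := by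
  rw [← coe_mapRingHom, ← coe_evalRingHom, asUnivariate, map_intEval, map_intEval]
  congr 2
  funext b
  rcases b with b | b
  · simp
  · cases b using Fin.lastCases <;> simp

namespace SignDetermined

variable {r r' : (α → ℝ) → (Fin n → ℝ) → Prop}

lemma of_sign (q : MvPolynomial (α ⊕ Fin n) ℤ) (P : SignType → Prop) :
    SignDetermined fun v xs => P (SignType.sign (intEval (Sum.elim v xs) q)) :=
  ⟨{q}, fun _ _ _ _ h => iff_of_eq (congrArg P (h q (Finset.mem_singleton_self q)))⟩

lemma imp (hr : SignDetermined r) (hr' : SignDetermined r') :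
    SignDetermined fun v xs => r v xs → r' v xs := by
  classical
  obtain ⟨F, hF⟩ := hr
  obtain ⟨G, hG⟩ := hr'
  exact ⟨F ∪ G, fun v w xs ys h => imp_congr
    (hF v w xs ys fun f hf => h f (Finset.mem_union_left _ hf))
    (hG v w xs ys fun f hf => h f (Finset.mem_union_right _ hf))⟩

lemma all {r : (α → ℝ) → (Fin (n + 1) → ℝ) → Prop} (hr : SignDetermined r) :
    SignDetermined fun v (xs : Fin n → ℝ) => ∀ a, r v (Fin.snoc (α := fun _ => ℝ) xs a) := by
  classical
  obtain ⟨F, hF⟩ := hr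
  obtain ⟨G, hG⟩ := finitelyDetermined (F.image (asUnivariate α n))
  refine ⟨G, fun v w xs ys h => ?_⟩
  obtain ⟨g, hg⟩ := hG _ _ h
  refine g.toEquiv.forall_congr fun a => hF _ _ _ _ fun f hf => ?_
  have := hg _ (Finset.mem_image_of_mem _ hf) a
  rwa [eval_map_asUnivariate, eval_map_asUnivariate] at this

end SignDetermined

end SignDetermined

section Definable

attribute [local instance] realOrderedRingStructure

lemma exists_realize_eq_intEval {β : Type*} (t : (Language.ring.sum Language.order).Term β) :
    ∃ q : MvPolynomial β ℤ, ∀ v : β → ℝ, t.realize v = intEval v q := by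
  induction t with
  | var b => exact ⟨.X b, fun v => by simp⟩
  | func f ts ih =>
    choose q hq using ih
    rcases f with f | f
    · cases f with
      | add => exact ⟨q 0 + q 1, fun v => by rw [map_add, ← hq, ← hq]; rfl⟩
      | mul => exact ⟨q 0 * q 1, fun v => by rw [map_mul, ← hq, ← hq]; rfl⟩
      | neg => exact ⟨-q 0, fun v => by rw [map_neg, ← hq]; rfl⟩
      | zero => exact ⟨0, fun v => by rw [map_zero]; rfl⟩
      | one => exact ⟨1, fun v => by rw [map_one]; rfl⟩
    · exact isEmptyElim f

theorem signDetermined_realize {α : Type*} {n : ℕ}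
    (φ : (Language.ring.sum Language.order).BoundedFormula α n) :
    SignDetermined (φ.Realize (M := ℝ)) := by
  induction φ with
  | falsum => exact ⟨∅, fun v w xs ys _ => Iff.rfl⟩
  | equal t₁ t₂ =>
    obtain ⟨q₁, h₁⟩ := exists_realize_eq_intEval t₁
    obtain ⟨q₂, h₂⟩ := exists_realize_eq_intEval t₂
    convert SignDetermined.of_sign (q₁ - q₂) (· = 0) using 3 with v xs
    rw [sign_eq_zero_iff, map_sub, sub_eq_zero, ← h₁, ← h₂]
    rfl
  | rel R ts =>
    rcases R with R | R
    · exact isEmptyElim R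
    cases R
    obtain ⟨q₁, h₁⟩ := exists_realize_eq_intEval (ts 0)
    obtain ⟨q₂, h₂⟩ := exists_realize_eq_intEval (ts 1)
    convert SignDetermined.of_sign (q₁ - q₂) (· ≤ 0) using 3 with v xs
    rw [sign_nonpos_iff, map_sub, sub_nonpos, ← h₁, ← h₂]
    rfl
  | imp φ ψ ihφ ihψ => exact ihφ.imp ihψ
  | all φ ih => exact ih.all

theorem exists_finset_polynomial_sign_of_definable {A s : Set ℝ}
    (hdef : A.Definable₁ (Language.ring.sum Language.order) s) :
    ∃ F : Finset ℝ[X], ∀ t u : ℝ,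
      (∀ f ∈ F, SignType.sign (f.eval t) = SignType.sign (f.eval u)) → (t ∈ s ↔ u ∈ s) := by
  classical
  obtain ⟨φ, hφ⟩ := definable_iff_exists_formula_sum.1 hdef
  obtain ⟨F, hF⟩ := signDetermined_realize φ
  let w : (A ⊕ Fin 1) ⊕ Fin 0 → ℝ[X] := Sum.elim (Sum.elim (fun a => C (a : ℝ)) fun _ => X) default
  have eval_intEval (f) (t : ℝ) (xs : Fin 0 → ℝ) : (intEval w f).eval t =
      intEval (Sum.elim (Sum.elim (fun a : A => (a : ℝ)) fun _ => t) xs) f := by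
    rw [← coe_evalRingHom, map_intEval]
    congr 2
    funext b
    rcases b with (b | b) | b
    · simp [w]
    · simp [w]
    · exact b.elim0
  have hmem (t : ℝ) : t ∈ s ↔ φ.Realize (Sum.elim (fun a : A => (a : ℝ)) fun _ => t) :=
    Set.ext_iff.1 hφ fun _ => t
  refine ⟨F.image (intEval w), fun t u h => ?_⟩
  rw [hmem, hmem]
  refine hF _ _ _ _ fun f hf => ?_
  rw [← eval_intEval, ← eval_intEval]
  exact h _ (Finset.mem_image_of_mem _ hf)

end Definable

section Frontier

lemma eventually_sign_eval_eq_of_ne_zero {f : ℝ[X]} {t : ℝ} (ht : f.eval t ≠ 0) :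
    ∀ᶠ u in nhds t, SignType.sign (f.eval t) = SignType.sign (f.eval u) := by
  have hcont : ContinuousAt (fun u => SignType.sign (f.eval u)) t :=
    ContinuousAt.comp (f := fun u => f.eval u) (continuousAt_sign_of_ne_zero ht)
      f.continuous.continuousAt
  exact hcont.eventually (by simp [nhds_discrete])

lemma finite_frontier_of_sign_eval {s : Set ℝ} (F : Finset ℝ[X])
    (hF : ∀ t u : ℝ,
      (∀ f ∈ F, SignType.sign (f.eval t) = SignType.sign (f.eval u)) → (t ∈ s ↔ u ∈ s)) :
    (frontier s).Finite := by
  classical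
  refine (F.biUnion fun f => f.roots.toFinset).finite_toSet.subset fun t ht => ?_
  by_contra hroots
  have hsign : ∀ᶠ u in nhds t, ∀ f ∈ F, SignType.sign (f.eval t) = SignType.sign (f.eval u) := by
    rw [Filter.eventually_all_finset]
    intro f hf
    by_cases h0 : f = 0
    · simp [h0]
    · exact eventually_sign_eval_eq_of_ne_zero fun h =>
        hroots (Finset.mem_biUnion.2 ⟨f, hf, Multiset.mem_toFinset.2 ((mem_roots h0).2 h)⟩)
  rw [frontier_eq_closure_inter_closure, mem_inter_iff, mem_closure_iff_frequently,
    mem_closure_iff_frequently] at ht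
  obtain ⟨u, hu, hu_sign⟩ := (ht.1.and_eventually hsign).exists
  obtain ⟨v, hv, hv_sign⟩ := (ht.2.and_eventually hsign).exists
  exact hv ((hF t v hv_sign).1 ((hF t u hu_sign).2 hu))

end Frontier

theorem real_definable_empty_interior_finite_general {A s : Set ℝ}
    (hdef : @Set.Definable₁ ℝ A (Language.ring.sum Language.order) realOrderedRingStructure s) :
    (frontier s).Finite := by
  obtain ⟨F, hF⟩ := exists_finset_polynomial_sign_of_definable hdef
  exact finite_frontier_of_sign_eval F hF

end

/-- Every subset of `ℝ` definable with parameters in the ordered field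
`(ℝ, +, ·, 0, 1, ≤)` that has empty interior is finite. -/
theorem real_definable_empty_interior_finite (s : Set ℝ)
    (hdef : @Set.Definable₁ ℝ (Set.univ : Set ℝ) (Language.ring.sum Language.order)
      realOrderedRingStructure s)
    (hint : interior s = ∅) :
    s.Finite := by
  refine (real_definable_empty_interior_finite_general hdef).subset ?_
  simpa only [frontier, hint, Set.sdiff_empty] using subset_closure
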